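/- arXiv:1702.06288 — 3 statements merged into one kernel-verified Lean document; each statement's English description precedes it below -/
import Mathlib

section
/- (Blasius' lemma, first identity.) Let γ = (γ₁,γ₂) : ℝ → ℝ² be a closed C¹ curve with period 1, and let f = (f₁,f₂) and g = (g₁,g₂) be continuous vector fields on the image of γ, both tangent to the curve. Then ∫₀¹ (f·g)(γ(t)) · (−γ₂'(t) + i γ₁'(t)) dt = i · conj( ∫₀¹ f̂(γ(t)) ĝ(γ(t)) (γ₁'(t) + i γ₂'(t)) dt ), where f·g denotes the Euclidean inner product of f and g; that is, ∫_C (f·g) n ds = i ( ∫_C f̂ ĝ dz )* upon identifying ℝ² with ℂ. -/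
/-!
The identity holds already for the integrands. Let `F`, `G` be the complex numbers of `f`, `g` at a
point of the curve and `dz` the line element. Tangency of `f` says that `conj F * dz` is real, so
`F * conj dz = conj F * dz`, and likewise for `G`. Hence `F * G * conj dz` equals both
`conj F * G * dz` and `F * conj G * dz`, whose average is `(f·g) dz`. Since `n ds = i dz`, it remains
to multiply by `i` and to pull the constant and the conjugation out of the integral.
-/

/-- Complex representation `f̂ = f₁ − i f₂` of a plane vector field value. -/
noncomputable def hatC (v : ℝ × ℝ) : ℂ := (v.1 : ℂ) - (v.2 : ℂ) * Complex.I

/-- The point `z = γ₁(t) + i γ₂(t)` of a plane curve, as a complex number. -/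
noncomputable def cZ (γ : ℝ → ℝ × ℝ) (t : ℝ) : ℂ := ((γ t).1 : ℂ) + ((γ t).2 : ℂ) * Complex.I

/-- The complex line element `dz/dt = γ₁'(t) + i γ₂'(t)` along a plane curve. -/
noncomputable def cDz (γ : ℝ → ℝ × ℝ) (t : ℝ) : ℂ :=
  ((deriv γ t).1 : ℂ) + ((deriv γ t).2 : ℂ) * Complex.I

/-- The outward-normal line element `n ds/dt = −γ₂'(t) + i γ₁'(t)`, as a complex number. -/
noncomputable def cNds (γ : ℝ → ℝ × ℝ) (t : ℝ) : ℂ :=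
  (-(deriv γ t).2 : ℂ) + ((deriv γ t).1 : ℂ) * Complex.I

/-- A vector field `f` is tangent to the curve `γ` if
`f₁(γ(t))γ₂'(t) − f₂(γ(t))γ₁'(t) = 0` for all `t`. -/
def TangentTo (f : ℝ × ℝ → ℝ × ℝ) (γ : ℝ → ℝ × ℝ) : Prop :=
  ∀ t : ℝ, (f (γ t)).1 * (deriv γ t).2 - (f (γ t)).2 * (deriv γ t).1 = 0

/-- Blasius' lemma, first identity: for tangent fields `f, g` on a closed C¹ curve,
`∫_C (f·g) n ds = i (∫_C f̂ ĝ dz)*`. -/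
theorem blasius_first_identity
    (γ : ℝ → ℝ × ℝ) (hγ : ContDiff ℝ 1 γ) (hper : Function.Periodic γ 1)
    (f g : ℝ × ℝ → ℝ × ℝ)
    (hf : ContinuousOn f (Set.range γ)) (hg : ContinuousOn g (Set.range γ))
    (hft : TangentTo f γ) (hgt : TangentTo g γ) :
    (∫ t in (0:ℝ)..1,
        (((f (γ t)).1 * (g (γ t)).1 + (f (γ t)).2 * (g (γ t)).2 : ℝ) : ℂ) * cNds γ t)
      = Complex.I * (starRingEnd ℂ)
          (∫ t in (0:ℝ)..1, hatC (f (γ t)) * hatC (g (γ t)) * cDz γ t) := by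
  rw [← intervalIntegral.intervalIntegral_conj, ← intervalIntegral.integral_const_mul]
  congr 1
  funext t
  have h1 := hft t
  have h2 := hgt t
  apply Complex.ext
  · simp [hatC, cDz, cNds]
    linear_combination -(g (γ t)).1 * h1 - (f (γ t)).1 * h2
  · simp [hatC, cDz, cNds]
    linear_combination -(g (γ t)).2 * h1 - (f (γ t)).2 * h2
end

section
/- (Energy conservation for the massive point vortex system.) Let Ω ⊆ ℝ² be open, let ψ : Ω → ℝ be continuously differentiable, and set u := ∇^⊥ψ = (−∂₂ψ, ∂₁ψ). Let m > 0 and γ ∈ ℝ. If h ∈ C²([0,T]; Ω) satisfies m h''(t) = γ (h'(t) − γ u(h(t)))^⊥ for all t ∈ [0,T], then the energy ½ m |h'(t)|² − γ² ψ(h(t)) is constant on [0,T]. -/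
/-!
Since `(∇^⊥ψ)^⊥ = -∇ψ`, the equation of motion reads `m h'' = γ (h')^⊥ + γ² ∇ψ(h)`. The gyroscopic
force `γ (h')^⊥` is orthogonal to `h'` and does no work, so `m h'' ⬝ h' = γ² ∇ψ(h) ⬝ h'`, which is
the time derivative of `γ² ψ(h)`. Hence the energy has zero derivative on `[0, T]`.
-/

open Matrix

/-- Orthogonal vector in the plane: `x^⊥ = (−x₂, x₁)`. -/
def perp2 (v : Fin 2 → ℝ) : Fin 2 → ℝ := ![-(v 1), v 0]

/-- The perpendicular gradient `∇^⊥ψ = (−∂₂ψ, ∂₁ψ)` of a scalar function on `ℝ²`. -/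
noncomputable def gradPerp (ψ : (Fin 2 → ℝ) → ℝ) (x : Fin 2 → ℝ) : Fin 2 → ℝ :=
  ![-(fderiv ℝ ψ x (Pi.single 1 1)), fderiv ℝ ψ x (Pi.single 0 1)]

lemma fderiv_apply_fin_two (L : (Fin 2 → ℝ) →L[ℝ] ℝ) (v : Fin 2 → ℝ) :
    L v = v 0 * L (Pi.single 0 1) + v 1 * L (Pi.single 1 1) := by
  conv_lhs => rw [pi_eq_sum_univ' v]
  simp [Fin.sum_univ_two, map_add, map_smul]

/-- The power balance: the gyroscopic part of the force does no work. -/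
lemma power_balance (ψ : (Fin 2 → ℝ) → ℝ) (m γ : ℝ) (x v a : Fin 2 → ℝ)
    (hODE : m • a = γ • perp2 (v - γ • gradPerp ψ x)) :
    m * (v ⬝ᵥ a) = γ ^ 2 * fderiv ℝ ψ x v := by
  have h0 := congrFun hODE 0
  have h1 := congrFun hODE 1
  simp [perp2, gradPerp] at h0 h1
  rw [fderiv_apply_fin_two (fderiv ℝ ψ x) v]
  simp only [dotProduct, Fin.sum_univ_two]
  linear_combination v 0 * h0 + v 1 * h1

/-- Energy conservation for the massive point vortex system: if
`m h'' = γ (h' − γ ∇^⊥ψ(h))^⊥` on `[0,T]` then `½ m |h'|² − γ² ψ(h)` is constant. -/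
theorem massive_point_vortex_energy_conservation
    (Ω : Set (Fin 2 → ℝ)) (hΩ : IsOpen Ω)
    (ψ : (Fin 2 → ℝ) → ℝ) (hψ : ContDiffOn ℝ 1 ψ Ω)
    (m γ : ℝ) (hm : 0 < m) (T : ℝ)
    (h : ℝ → Fin 2 → ℝ) (hh : ContDiff ℝ 2 h)
    (hhΩ : ∀ t ∈ Set.Icc (0:ℝ) T, h t ∈ Ω)
    (hODE : ∀ t ∈ Set.Icc (0:ℝ) T,
      m • deriv (deriv h) t = γ • perp2 (deriv h t - γ • gradPerp ψ (h t))) :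
    ∀ t ∈ Set.Icc (0:ℝ) T,
      (1/2) * m * (deriv h t ⬝ᵥ deriv h t) - γ^2 * ψ (h t)
        = (1/2) * m * (deriv h 0 ⬝ᵥ deriv h 0) - γ^2 * ψ (h 0) := by
  have hd : ∀ t, HasDerivAt h (deriv h t) t := fun t =>
    ((hh.differentiable (by norm_num)) t).hasDerivAt
  have hd2 : ∀ t, HasDerivAt (deriv h) (deriv (deriv h) t) t := by
    have h1 : ContDiff ℝ 1 (deriv h) := by
      have h2 : ContDiff ℝ (1 + 1) h := by simpa [one_add_one_eq_two] using hh
      exact (contDiff_succ_iff_deriv.1 h2).2.2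
    exact fun t => ((h1.differentiable (by norm_num)) t).hasDerivAt
  have hE : ∀ t ∈ Set.Icc (0:ℝ) T, HasDerivAt
      (fun t => (1/2) * m * (deriv h t ⬝ᵥ deriv h t) - γ^2 * ψ (h t)) 0 t := by
    intro t ht
    have hψt : HasFDerivAt ψ (fderiv ℝ ψ (h t)) (h t) :=
      ((hψ.differentiableOn (by norm_num)).differentiableAt
        (hΩ.mem_nhds (hhΩ t ht))).hasFDerivAt
    have hp := hψt.comp_hasDerivAt t (hd t)
    have hc := hasDerivAt_pi.1 (hd2 t)
    have hk : HasDerivAt (fun t => deriv h t ⬝ᵥ deriv h t)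
        (2 * (deriv h t ⬝ᵥ deriv (deriv h) t)) t := by
      simp only [dotProduct, Fin.sum_univ_two]
      exact (((hc 0).mul (hc 0)).add ((hc 1).mul (hc 1))).congr_deriv (by ring)
    refine ((hk.const_mul ((1/2) * m)).sub (hp.const_mul (γ^2))).congr_deriv ?_
    linear_combination power_balance ψ m γ (h t) _ _ (hODE t ht)
  exact constant_of_has_deriv_right_zero
    (fun t ht => (hE t ht).continuousAt.continuousWithinAt)
    (fun t ht => (hE t (Set.Ico_subset_Icc_self ht)).hasDerivWithinAt)
end

section
/- (Yudovich-type vanishing lemma.) Let T > 0 and C > 0, and let y : [0,T] → ℝ be a differentiable function with y(t) ≥ 0 for all t, y(0) = 0, and y'(t) ≤ C p · y(t)^{1 − 1/p} for every real p ≥ 2 and every t ∈ [0,T]. Then y(t) = 0 for every t ∈ [0,T] with t < 1/C. -/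
/-!
For `D > C` and `δ > 0` the function `B t = (D t + δ) ^ n` satisfies `B 0 > 0 = y 0` and
`B' = D n B ^ (1 - 1/n)`. Wherever `y = B`, the differential inequality with `p = n` gives
`y' ≤ C n B ^ (1 - 1/n) < B'`, so `y` never crosses `B` and `y t ≤ (D t + δ) ^ n` for every
`n ≥ 2` (`le_barrier`). If `C t < 1`, then `D` and `δ` can be fixed with `D t + δ < 1`, and
`n → ∞` forces `y t = 0`. Taking `D` strictly larger than `C` makes the comparison strict, so no
uniqueness or Lipschitz argument for the comparison equation is needed, and `δ` does not have to
tend to `0` before `n → ∞`.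
-/

/-- Comparison of `y` with the strict supersolution `(D t + δ) ^ n`. -/
lemma le_barrier {T C D δ : ℝ} (hC : 0 < C) (hCD : C < D) (hδ : 0 < δ) {y : ℝ → ℝ}
    (hdiff : ∀ t ∈ Set.Icc (0:ℝ) T, DifferentiableAt ℝ y t) (hy0 : y 0 = 0)
    {n : ℕ} (hn : 2 ≤ n)
    (hineq : ∀ t ∈ Set.Icc (0:ℝ) T, deriv y t ≤ C * n * y t ^ (1 - 1 / (n : ℝ)))
    {t : ℝ} (ht : t ∈ Set.Icc (0:ℝ) T) : y t ≤ (D * t + δ) ^ n := by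
  refine image_le_of_deriv_right_lt_deriv_boundary (f := y) (f' := deriv y)
    (B := fun t => (D * t + δ) ^ n) (B' := fun t => n * (D * t + δ) ^ (n - 1) * D)
    (fun s hs => (hdiff s hs).continuousAt.continuousWithinAt)
    (fun s hs => (hdiff s ⟨hs.1, hs.2.le⟩).hasDerivAt.hasDerivWithinAt) ?_ ?_ ?_ ht
  · simp only [hy0, mul_zero, zero_add]
    positivity
  · intro s
    have h : HasDerivAt (fun t : ℝ => D * t + δ) D s := by
      simpa using ((hasDerivAt_id s).const_mul D).add_const δ
    exact h.fun_pow n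
  · intro s hs hys
    have hn0 : (0 : ℝ) < n := by positivity
    have hpos : 0 < D * s + δ := by
      have := mul_nonneg (hC.trans hCD).le hs.1
      linarith
    have hpow : y s ^ (1 - 1 / (n : ℝ)) = (D * s + δ) ^ (n - 1) := by
      rw [hys, ← Real.rpow_natCast, ← Real.rpow_natCast, ← Real.rpow_mul hpos.le,
        Nat.cast_sub (by lia)]
      congr 1
      push_cast
      field_simp
    calc deriv y s ≤ C * n * y s ^ (1 - 1 / (n : ℝ)) := hineq s ⟨hs.1, hs.2.le⟩
      _ = C * (n * (D * s + δ) ^ (n - 1)) := by rw [hpow]; ring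
      _ < D * (n * (D * s + δ) ^ (n - 1)) := mul_lt_mul_of_pos_right hCD (by positivity)
      _ = n * (D * s + δ) ^ (n - 1) * D := by ring

/-- Yudovich-type vanishing lemma: a nonnegative differentiable function on `[0,T]` with
`y(0) = 0` and `y' ≤ C p y^{1−1/p}` for every `p ≥ 2` vanishes on `[0,T] ∩ [0, 1/C)`. -/
theorem yudovich_vanishing_lemma
    (T C : ℝ) (hT : 0 < T) (hC : 0 < C)
    (y : ℝ → ℝ)
    (hdiff : ∀ t ∈ Set.Icc (0:ℝ) T, DifferentiableAt ℝ y t)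
    (hnn : ∀ t ∈ Set.Icc (0:ℝ) T, 0 ≤ y t)
    (hy0 : y 0 = 0)
    (hineq : ∀ p : ℝ, 2 ≤ p → ∀ t ∈ Set.Icc (0:ℝ) T,
      deriv y t ≤ C * p * y t ^ (1 - 1/p)) :
    ∀ t ∈ Set.Icc (0:ℝ) T, t < 1/C → y t = 0 := by
  intro t ht htC
  have ht0 : 0 ≤ t := ht.1
  have hCt : 0 < 1 - C * t := by
    rw [lt_div_iff₀ hC] at htC
    linarith
  -- With `D = C + e` and `δ = e`, the base `D t + δ` is the midpoint of `C t` and `1`.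
  obtain ⟨e, he, hbase⟩ : ∃ e > 0, (C + e) * t + e = (1 + C * t) / 2 :=
    ⟨(1 - C * t) / (2 * (t + 1)), by positivity, by field_simp; ring⟩
  have hlim : Filter.Tendsto (fun n : ℕ => ((C + e) * t + e) ^ n) Filter.atTop (nhds 0) :=
    tendsto_pow_atTop_nhds_zero_of_lt_one (by positivity) (by linarith)
  refine le_antisymm (ge_of_tendsto hlim ?_) (hnn t ht)
  filter_upwards [Filter.eventually_ge_atTop 2] with n hn
  exact le_barrier hC (by linarith) he hdiff hy0 hn (hineq n (by exact_mod_cast hn)) ht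
end
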